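/- Let E, A_xx be M_x×M_x, A_xv be M_x×M_v, A_zx be M_z×M_x, A_zv be M_z×M_v, and Φ be M_v×M_z complex matrices, with I_{M_v} − Φ A_zv invertible, and define A = A_xx + A_xv (I − Φ A_zv)^{-1} Φ A_zx. Let Λ_r be any set of M_x + 1 distinct complex numbers. Then the polynomial λ ↦ det(λE − A) is not identically zero (i.e., the descriptor pair (E, A) is regular) if and only if there exists λ_0 ∈ Λ_r such that the (M_x+M_v)×(M_x+M_v) matrix Θ(λ_0) = [[λ_0 E − A_xx, −A_xv],[−Φ A_zx, I − Φ A_zv]] is invertible. -/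

import Mathlib

open Polynomial

/-!
The Schur complement of the block `I − Φ Azv` in `Θ(λ)` is exactly `λE − A`, so `Θ(λ)` is invertible
precisely when `λ` is not a root of `det (λE − A)`. This polynomial has degree at most `Mx`, so it
vanishes identically as soon as it vanishes at `Mx + 1` points.
-/

theorem ne_zero_iff_exists_eval_ne_zero_of_natDegree_lt_card {R : Type*} [CommRing R] [IsDomain R]
    {p : R[X]} {s : Finset R} (hs : p.natDegree < s.card) :
    p ≠ 0 ↔ ∃ x ∈ s, p.eval x ≠ 0 := by
  constructor
  · contrapose!
    exact fun hp => eq_zero_of_natDegree_lt_card_of_eval_eq_zero' p s hp hs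
  · rintro ⟨x, -, hx⟩ rfl
    exact hx eval_zero

section Pencil

variable {R m : Type*} [CommRing R] [Fintype m] [DecidableEq m]

theorem natDegree_det_X_smul_sub_C_le (E A : Matrix m m R) :
    ((X : R[X]) • E.map C - A.map C).det.natDegree ≤ Fintype.card m := by
  have map_C_neg : (-A).map C = -A.map C := map_neg C.mapMatrix A
  rw [sub_eq_add_neg, ← map_C_neg]
  exact natDegree_det_X_add_C_le E (-A)

theorem eval_det_X_smul_sub_C (E A : Matrix m m R) (x : R) :
    ((X : R[X]) • E.map C - A.map C).det.eval x = (x • E - A).det := by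
  rw [← coe_evalRingHom, RingHom.map_det]
  congr 1
  ext i j
  simpa using mul_comm (E i j) x

theorem det_X_smul_sub_C_ne_zero_iff_exists_det_ne_zero [IsDomain R] (E A : Matrix m m R)
    {s : Finset R} (hs : Fintype.card m < s.card) :
    ((X : R[X]) • E.map C - A.map C).det ≠ 0 ↔ ∃ x ∈ s, (x • E - A).det ≠ 0 := by
  simpa only [eval_det_X_smul_sub_C] using
    ne_zero_iff_exists_eval_ne_zero_of_natDegree_lt_card
      ((natDegree_det_X_smul_sub_C_le E A).trans_lt hs)

end Pencil

theorem isUnit_fromBlocks_sub_neg_neg_iff {R m n : Type*} [CommRing R] [Fintype m] [DecidableEq m]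
    [Fintype n] [DecidableEq n] (P A : Matrix m m R) (B : Matrix m n R) (C : Matrix n m R)
    {D : Matrix n n R} (hD : IsUnit D) :
    IsUnit (Matrix.fromBlocks (P - A) (-B) (-C) D) ↔ IsUnit (P - (A + B * D⁻¹ * C)) := by
  let := hD.invertible
  rw [Matrix.isUnit_fromBlocks_iff_of_invertible₂₂, Matrix.invOf_eq_nonsing_inv]
  simp only [Matrix.neg_mul, Matrix.mul_neg, neg_neg, sub_sub]

theorem nds_regularity_iff_theta_invertible_on_finite_set_general
    {K x v z : Type*} [Field K] [Fintype x] [DecidableEq x] [Fintype v] [DecidableEq v] [Fintype z]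
    (E Axx : Matrix x x K) (Axv : Matrix x v K) (Azx : Matrix z x K) (Azv : Matrix z v K)
    (Φ : Matrix v z K) (hwp : IsUnit (1 - Φ * Azv))
    (A : Matrix x x K) (hA : A = Axx + Axv * (1 - Φ * Azv)⁻¹ * (Φ * Azx))
    (Λr : Finset K) (hΛr : Fintype.card x < Λr.card) :
    ((X : K[X]) • E.map C - A.map C).det ≠ 0 ↔
      ∃ lam₀ ∈ Λr, IsUnit (Matrix.fromBlocks (lam₀ • E - Axx) (-Axv)
        (-(Φ * Azx)) (1 - Φ * Azv)) := by
  have theta_isUnit_iff (lam : K) :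
      IsUnit (Matrix.fromBlocks (lam • E - Axx) (-Axv) (-(Φ * Azx)) (1 - Φ * Azv)) ↔
        (lam • E - A).det ≠ 0 := by
    rw [isUnit_fromBlocks_sub_neg_neg_iff _ _ _ _ hwp, ← hA, Matrix.isUnit_iff_isUnit_det,
      isUnit_iff_ne_zero]
  simpa only [theta_isUnit_iff] using det_X_smul_sub_C_ne_zero_iff_exists_det_ne_zero E A hΛr

/-- **Theorem 1 (regularity of the NDS).** Under the well-posedness condition that
`I − Φ Azv` is invertible, with `A = Axx + Axv (I − Φ Azv)⁻¹ Φ Azx`, and with `Λr` any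
set of `Mx + 1` distinct complex numbers, the polynomial `λ ↦ det (λE − A)` is not
identically zero (i.e. the descriptor pair `(E, A)` is regular) if and only if there is
a `λ₀ ∈ Λr` at which the matrix `Θ(λ₀) = [[λ₀E − Axx, −Axv],[−Φ Azx, I − Φ Azv]]` is
invertible. -/
theorem nds_regularity_iff_theta_invertible_on_finite_set
    (Mx Mv Mz : ℕ)
    (E Axx : Matrix (Fin Mx) (Fin Mx) ℂ)
    (Axv : Matrix (Fin Mx) (Fin Mv) ℂ)
    (Azx : Matrix (Fin Mz) (Fin Mx) ℂ)
    (Azv : Matrix (Fin Mz) (Fin Mv) ℂ)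
    (Φ : Matrix (Fin Mv) (Fin Mz) ℂ)
    (hwp : IsUnit ((1 : Matrix (Fin Mv) (Fin Mv) ℂ) - Φ * Azv))
    (A : Matrix (Fin Mx) (Fin Mx) ℂ)
    (hA : A = Axx + Axv * ((1 : Matrix (Fin Mv) (Fin Mv) ℂ) - Φ * Azv)⁻¹ * (Φ * Azx))
    (Λr : Finset ℂ) (hΛr : Λr.card = Mx + 1) :
    Matrix.det ((X : ℂ[X]) • E.map C - A.map C) ≠ 0 ↔
      ∃ lam₀ ∈ Λr,
        IsUnit (Matrix.fromBlocks (lam₀ • E - Axx) (-Axv)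
          (-(Φ * Azx)) ((1 : Matrix (Fin Mv) (Fin Mv) ℂ) - Φ * Azv)) :=
  nds_regularity_iff_theta_invertible_on_finite_set_general E Axx Axv Azx Azv Φ hwp A hA Λr
    (by simp [hΛr])
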